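/- Let λ, μ > 0, set σ_- = (√λ - √μ)² and σ_+ = (√λ + √μ)². Then for every real z < 0, ∫_{σ_-}^{σ_+} (x - z)^{-1} · (λ+μ-x) / (2μπ √((x - σ_-)(σ_+ - x))) dx = (1/(2μ)) · ( -1 + (λ+μ-z)/√((λ+μ-z)² - 4λμ) ), where all square roots are the nonnegative real square root. -/

import Mathlib

open Real MeasureTheory intervalIntegral

/-!
Let `ρ(x) = 1 / (π √((x - a) (b - x)))` be the arcsine density on `(a, b)`. For `ℓ` affine and
positive at `a` and `b`, `∫ ρ / ℓ = 1 / √(ℓ(a) ℓ(b))`: the Möbius map `φ` sending `a` to `-1`,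
`b` to `1` and the zero of `ℓ` to `∞` satisfies `dφ / √(1 - φ²) = π √(ℓ(a) ℓ(b)) ρ / ℓ dx`, so
`arcsin ∘ φ` is an antiderivative of the right-hand side, and it increases from `-π/2` to `π/2`.

The cases `ℓ = 1` and `ℓ(x) = x - z` give the Stieltjes transform of `(c - x) ρ(x)`, because
`(c - x) / (x - z) = (c - z) / (x - z) - 1`.
-/

section ArcsineDensity

variable {a b m k x : ℝ}

/-- The density of the arcsine distribution on `(a, b)`. It vanishes outside that interval, since
`√y = 0` for `y ≤ 0` and `0⁻¹ = 0`. -/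
noncomputable def arcsineDensity (a b x : ℝ) : ℝ :=
  (π * √((x - a) * (b - x)))⁻¹

/-- The Möbius map sending `a` to `-1`, `b` to `1` and the zero of `x ↦ m * x + k` to `∞`; it is
affine when `m = 0`. Its composition with `arcsin` is an antiderivative of
`(m * x + k)⁻¹ * arcsineDensity a b x`, up to a constant factor. -/
noncomputable def endpointMoebius (a b m k x : ℝ) : ℝ :=
  ((m * b + k) * (x - a) - (m * a + k) * (b - x)) / ((b - a) * (m * x + k))

lemma affine_pos_of_mem_Icc (ha : 0 < m * a + k) (hb : 0 < m * b + k) (hx : x ∈ Set.Icc a b) :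
    0 < m * x + k := by
  rcases le_total 0 m with hm | hm
  · linarith [mul_le_mul_of_nonneg_left hx.1 hm]
  · linarith [mul_le_mul_of_nonpos_left hx.2 hm]

lemma endpointMoebius_left (hab : a ≠ b) (ha : m * a + k ≠ 0) :
    endpointMoebius a b m k a = -1 := by
  have hba : b - a ≠ 0 := sub_ne_zero.2 hab.symm
  unfold endpointMoebius
  field_simp
  ring

lemma endpointMoebius_right (hab : a ≠ b) (hb : m * b + k ≠ 0) :
    endpointMoebius a b m k b = 1 := by
  have hba : b - a ≠ 0 := sub_ne_zero.2 hab.symm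
  unfold endpointMoebius
  field_simp
  ring

lemma continuousOn_endpointMoebius (hab : a ≠ b) (ha : 0 < m * a + k) (hb : 0 < m * b + k) :
    ContinuousOn (endpointMoebius a b m k) (Set.Icc a b) := by
  refine ContinuousOn.div (by fun_prop) (by fun_prop) fun x hx => ?_
  exact mul_ne_zero (sub_ne_zero.2 hab.symm) (affine_pos_of_mem_Icc ha hb hx).ne'

lemma hasDerivAt_endpointMoebius (hab : a ≠ b) (hx : m * x + k ≠ 0) :
    HasDerivAt (endpointMoebius a b m k)
      (2 * ((m * a + k) * (m * b + k)) / ((b - a) * (m * x + k) ^ 2)) x := by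
  have hba : b - a ≠ 0 := sub_ne_zero.2 hab.symm
  have hid := hasDerivAt_id x
  have hnum := ((hid.sub_const a).const_mul (m * b + k)).sub
    ((hid.const_sub b).const_mul (m * a + k))
  have hden := ((hid.const_mul m).add_const k).const_mul (b - a)
  refine (hnum.div hden (mul_ne_zero hba hx)).congr_deriv ?_
  simp only [id, Pi.sub_apply]
  field_simp
  ring

lemma one_sub_endpointMoebius_sq (hab : a ≠ b) (hx : m * x + k ≠ 0) :
    1 - endpointMoebius a b m k x ^ 2 =
      2 ^ 2 * ((m * a + k) * (m * b + k)) * ((x - a) * (b - x)) /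
        ((b - a) * (m * x + k)) ^ 2 := by
  have hba : b - a ≠ 0 := sub_ne_zero.2 hab.symm
  unfold endpointMoebius
  field_simp
  ring

lemma hasDerivAt_arcsin_endpointMoebius (ha : 0 < m * a + k) (hb : 0 < m * b + k)
    (hx : x ∈ Set.Ioo a b) :
    HasDerivAt (fun y => arcsin (endpointMoebius a b m k y))
      (π * √((m * a + k) * (m * b + k)) * ((m * x + k)⁻¹ * arcsineDensity a b x)) x := by
  have hab : a < b := hx.1.trans hx.2
  have hba : 0 < b - a := sub_pos.2 hab
  have hl : 0 < m * x + k := affine_pos_of_mem_Icc ha hb (Set.Ioo_subset_Icc_self hx)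
  have hends : 0 < (m * a + k) * (m * b + k) := mul_pos ha hb
  have hρ : 0 < (x - a) * (b - x) := mul_pos (sub_pos.2 hx.1) (sub_pos.2 hx.2)
  have hsq := one_sub_endpointMoebius_sq hab.ne hl.ne'
  have hlt : |endpointMoebius a b m k x| < 1 := by
    rw [← sq_lt_one_iff_abs_lt_one, ← sub_pos, hsq]
    positivity
  have hsqrt : √(1 - endpointMoebius a b m k x ^ 2) =
      2 * √((m * a + k) * (m * b + k)) * √((x - a) * (b - x)) / ((b - a) * (m * x + k)) := by
    rw [hsq, sqrt_div (by positivity), sqrt_sq (by positivity), sqrt_mul (by positivity),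
      sqrt_mul (by positivity), sqrt_sq zero_le_two]
  refine ((hasDerivAt_arcsin (abs_lt.1 hlt).1.ne' (abs_lt.1 hlt).2.ne).comp x
    (hasDerivAt_endpointMoebius hab.ne hl.ne')).congr_deriv ?_
  rw [hsqrt, arcsineDensity]
  field_simp
  rw [sq_sqrt hends.le]

lemma continuousOn_arcsin_endpointMoebius (hab : a ≠ b) (ha : 0 < m * a + k)
    (hb : 0 < m * b + k) :
    ContinuousOn (fun x => arcsin (endpointMoebius a b m k x)) (Set.Icc a b) :=
  continuous_arcsin.comp_continuousOn (continuousOn_endpointMoebius hab ha hb)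

lemma intervalIntegrable_inv_affine_mul_arcsineDensity (hab : a < b) (ha : 0 < m * a + k)
    (hb : 0 < m * b + k) :
    IntervalIntegrable (fun x => (m * x + k)⁻¹ * arcsineDensity a b x) volume a b := by
  set C := π * √((m * a + k) * (m * b + k))
  have hC_pos : 0 < C := mul_pos pi_pos (sqrt_pos.2 (mul_pos ha hb))
  suffices IntervalIntegrable (fun x => C * ((m * x + k)⁻¹ * arcsineDensity a b x)) volume a b by
    simpa only [inv_mul_cancel_left₀ hC_pos.ne'] using this.const_mul C⁻¹
  apply intervalIntegrable_deriv_of_nonneg (g := fun x => arcsin (endpointMoebius a b m k x))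
  · rw [Set.uIcc_of_le hab.le]
    exact continuousOn_arcsin_endpointMoebius hab.ne ha hb
  · rw [min_eq_left hab.le, max_eq_right hab.le]
    exact fun x hx => hasDerivAt_arcsin_endpointMoebius ha hb hx
  · rw [min_eq_left hab.le, max_eq_right hab.le]
    intro x hx
    have hl := affine_pos_of_mem_Icc ha hb (Set.Ioo_subset_Icc_self hx)
    unfold arcsineDensity
    positivity

theorem integral_inv_affine_mul_arcsineDensity (hab : a < b) (ha : 0 < m * a + k)
    (hb : 0 < m * b + k) :
    ∫ x in a..b, (m * x + k)⁻¹ * arcsineDensity a b x = (√((m * a + k) * (m * b + k)))⁻¹ := by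
  have hscaled : π * √((m * a + k) * (m * b + k)) *
      ∫ x in a..b, (m * x + k)⁻¹ * arcsineDensity a b x = π := by
    rw [← intervalIntegral.integral_const_mul,
      integral_eq_sub_of_hasDerivAt_of_le hab.le
        (continuousOn_arcsin_endpointMoebius hab.ne ha hb)
        (fun x hx => hasDerivAt_arcsin_endpointMoebius ha hb hx)
        ((intervalIntegrable_inv_affine_mul_arcsineDensity hab ha hb).const_mul _),
      endpointMoebius_left hab.ne ha.ne', endpointMoebius_right hab.ne hb.ne', arcsin_one,
      arcsin_neg_one]
    ring
  rw [mul_assoc, mul_eq_left₀ pi_ne_zero] at hscaled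
  exact eq_inv_of_mul_eq_one_right hscaled

lemma intervalIntegrable_arcsineDensity (hab : a < b) :
    IntervalIntegrable (arcsineDensity a b) volume a b := by
  simpa using
    intervalIntegrable_inv_affine_mul_arcsineDensity (m := 0) (k := 1) hab (by simp) (by simp)

theorem integral_arcsineDensity (hab : a < b) : ∫ x in a..b, arcsineDensity a b x = 1 := by
  simpa using integral_inv_affine_mul_arcsineDensity (m := 0) (k := 1) hab (by simp) (by simp)

variable {z : ℝ}

lemma intervalIntegrable_inv_sub_mul_arcsineDensity (hab : a < b) (hz : z < a) :
    IntervalIntegrable (fun x => (x - z)⁻¹ * arcsineDensity a b x) volume a b := by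
  simpa [← sub_eq_add_neg] using intervalIntegrable_inv_affine_mul_arcsineDensity
    (m := 1) (k := -z) hab (by linarith) (by linarith)

theorem integral_inv_sub_mul_arcsineDensity (hab : a < b) (hz : z < a) :
    ∫ x in a..b, (x - z)⁻¹ * arcsineDensity a b x = (√((a - z) * (b - z)))⁻¹ := by
  simpa only [one_mul, ← sub_eq_add_neg] using integral_inv_affine_mul_arcsineDensity
    (m := 1) (k := -z) hab (by linarith) (by linarith)

theorem integral_inv_sub_mul_const_sub_mul_arcsineDensity (hab : a < b) (hz : z < a) (c : ℝ) :
    ∫ x in a..b, (x - z)⁻¹ * ((c - x) * arcsineDensity a b x) =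
      -1 + (c - z) / √((a - z) * (b - z)) := by
  have hsplit : ∀ x ∈ Set.uIcc a b, (x - z)⁻¹ * ((c - x) * arcsineDensity a b x) =
      (c - z) * ((x - z)⁻¹ * arcsineDensity a b x) - arcsineDensity a b x := by
    intro x hx
    rw [Set.uIcc_of_le hab.le] at hx
    have hxz : x - z ≠ 0 := (sub_pos.2 (hz.trans_le hx.1)).ne'
    field_simp
    ring
  rw [integral_congr hsplit, intervalIntegral.integral_sub
      ((intervalIntegrable_inv_sub_mul_arcsineDensity hab hz).const_mul _)
      (intervalIntegrable_arcsineDensity hab), intervalIntegral.integral_const_mul,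
    integral_inv_sub_mul_arcsineDensity hab hz, integral_arcsineDensity hab]
  ring

end ArcsineDensity

section SpectralEdges

variable {lam mu : ℝ}

lemma sq_sqrt_sub_sqrt_lt_sq_sqrt_add_sqrt (hlam : 0 < lam) (hmu : 0 < mu) :
    (√lam - √mu) ^ 2 < (√lam + √mu) ^ 2 := by
  nlinarith [mul_pos (sqrt_pos.2 hlam) (sqrt_pos.2 hmu)]

lemma spectral_edges_sub_mul_sub (hlam : 0 ≤ lam) (hmu : 0 ≤ mu) (z : ℝ) :
    ((√lam - √mu) ^ 2 - z) * ((√lam + √mu) ^ 2 - z) = (lam + mu - z) ^ 2 - 4 * lam * mu := by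
  conv_rhs => rw [← sq_sqrt hlam, ← sq_sqrt hmu]
  ring

end SpectralEdges

theorem bilateral_constant_stieltjes_12_general (lam mu : ℝ) (hlam : 0 < lam) (hmu : 0 < mu)
    (z : ℝ) (hz : z < (√lam - √mu) ^ 2) :
    ∫ x in ((√lam - √mu) ^ 2)..((√lam + √mu) ^ 2),
        (x - z)⁻¹ * ((lam + mu - x) /
          (2 * mu * π * √((x - (√lam - √mu) ^ 2) * ((√lam + √mu) ^ 2 - x))))
      = (1 / (2 * mu)) * (-1 + (lam + mu - z) / √((lam + mu - z) ^ 2 - 4 * lam * mu)) := by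
  have hdensity : ∀ x, (x - z)⁻¹ * ((lam + mu - x) /
      (2 * mu * π * √((x - (√lam - √mu) ^ 2) * ((√lam + √mu) ^ 2 - x)))) =
      (1 / (2 * mu)) * ((x - z)⁻¹ * ((lam + mu - x) *
        arcsineDensity ((√lam - √mu) ^ 2) ((√lam + √mu) ^ 2) x)) := by
    intro x
    rw [arcsineDensity, mul_assoc (2 * mu) π, div_eq_mul_inv, mul_inv (2 * mu)]
    ring
  simp only [hdensity]
  rw [intervalIntegral.integral_const_mul, integral_inv_sub_mul_const_sub_mul_arcsineDensity
      (sq_sqrt_sub_sqrt_lt_sq_sqrt_add_sqrt hlam hmu) hz,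
    spectral_edges_sub_mul_sub hlam.le hmu.le]

/-- Stieltjes transform of the off-diagonal entry of the spectral matrix of the bilateral
birth-death process with constant rates: for `z < 0`,
`∫ (x-z)⁻¹ (λ+μ-x)/(2μπ√((x-σ₋)(σ₊-x))) dx = (1/(2μ))(-1 + (λ+μ-z)/√((λ+μ-z)²-4λμ))`. -/
theorem bilateral_constant_stieltjes_12 (lam mu : ℝ) (hlam : 0 < lam) (hmu : 0 < mu)
    (z : ℝ) (hz : z < 0) :
    ∫ x in ((Real.sqrt lam - Real.sqrt mu) ^ 2)..((Real.sqrt lam + Real.sqrt mu) ^ 2),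
        (x - z)⁻¹ * ((lam + mu - x) /
          (2 * mu * Real.pi * Real.sqrt ((x - (Real.sqrt lam - Real.sqrt mu) ^ 2) *
            ((Real.sqrt lam + Real.sqrt mu) ^ 2 - x))))
      = (1 / (2 * mu)) *
          (-1 + (lam + mu - z) / Real.sqrt ((lam + mu - z) ^ 2 - 4 * lam * mu)) :=
  bilateral_constant_stieltjes_12_general lam mu hlam hmu z (hz.trans_le (sq_nonneg _))
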